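/- Let (X,d) be a compact metric space, f : X → X a continuous map, and F a family (an upward hereditary collection) of subsets of ℕ. If f is positively F-expansive, then f has an F*-generator, where F* = {A ⊆ ℕ : A ∩ B ≠ ∅ for all B ∈ F} is the dual family of F. -/

import Mathlib

/-- `N_f(x,y,δ) = {n ∈ ℕ, n ≥ 1 : d(fⁿ x, fⁿ y) > δ}`. -/
def posNset {X : Type*} [MetricSpace X] (f : X → X) (x y : X) (δ : ℝ) : Set ℕ :=
  {n : ℕ | 1 ≤ n ∧ δ < dist (f^[n] x) (f^[n] y)}

/-- The dual family `F* = {A ⊆ ℕ : A ∩ B ≠ ∅ for all B ∈ F}`. -/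
def dualFamily (F : Set (Set ℕ)) : Set (Set ℕ) :=
  {A : Set ℕ | ∀ B ∈ F, (A ∩ B).Nonempty}

/-- `U` is a finite open cover of `X` which is a `G`-generator for `f`: for every
sequence `(Aₙ)` of members of `U` and every `S ∈ G`, `⋂_{n ∈ S} f⁻ⁿ(cl Aₙ)`
contains at most one point. -/
def IsGenerator {X : Type*} [MetricSpace X] (f : X → X) (G : Set (Set ℕ))
    (U : Set (Set X)) : Prop :=
  U.Finite ∧ (∀ A ∈ U, IsOpen A) ∧ ⋃₀ U = Set.univ ∧
    ∀ A : ℕ → Set X, (∀ n : ℕ, A n ∈ U) → ∀ S ∈ G,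
      (⋂ n ∈ S, f^[n] ⁻¹' closure (A n)).Subsingleton

/-!
Let `δ` be an expansivity constant. Total boundedness gives a finite open cover by sets of diameter
at most `δ`, and any such cover is an `F*`-generator: a set `S ∈ F*` meets `N_f(x,y,δ)` whenever
`x ≠ y`, so at some time `n ∈ S` the orbits of `x` and `y` are more than `δ` apart and cannot both
lie in the closure of `Aₙ`, which has the same diameter as `Aₙ`.
-/

/-- `δ` is an `F`-expansivity constant for `f`: the quantitative part of positive `F`-expansivity.
Here `F` is any collection of subsets of `ℕ` and `δ` any real number. -/
def IsExpansivityConstant {X : Type*} [MetricSpace X] (f : X → X) (F : Set (Set ℕ)) (δ : ℝ) :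
    Prop :=
  ∀ x y : X, x ≠ y → posNset f x y δ ∈ F

theorem exists_finite_isOpen_cover_ediam_le {X : Type*} [PseudoEMetricSpace X] {s : Set X}
    (hs : TotallyBounded s) {ε : ENNReal} (hε : ε ≠ 0) :
    ∃ U : Set (Set X), U.Finite ∧ (∀ A ∈ U, IsOpen A) ∧ s ⊆ ⋃₀ U ∧
      ∀ A ∈ U, Metric.ediam A ≤ ε := by
  obtain ⟨t, ht, hst⟩ := EMetric.totallyBounded_iff.mp hs (ε / 2) (ENNReal.half_pos hε)
  refine ⟨(Metric.eball · (ε / 2)) '' t, ht.image _, ?_, ?_, ?_⟩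
  · exact Set.forall_mem_image.mpr fun _ _ ↦ Metric.isOpen_eball
  · rwa [Set.sUnion_image]
  · refine Set.forall_mem_image.mpr fun x _ ↦ ?_
    calc Metric.ediam (Metric.eball x (ε / 2)) ≤ 2 * (ε / 2) := Metric.ediam_eball_le
      _ = ε := ENNReal.mul_div_cancel two_ne_zero ENNReal.ofNat_ne_top

section

variable {X : Type*} [MetricSpace X] {f : X → X} {F : Set (Set ℕ)} {δ : ℝ}

theorem IsExpansivityConstant.eq_of_forall_dist_iterate_le (hexp : IsExpansivityConstant f F δ)
    {S : Set ℕ} (hS : S ∈ dualFamily F) {x y : X}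
    (hxy : ∀ n ∈ S, dist (f^[n] x) (f^[n] y) ≤ δ) : x = y := by
  by_contra hne
  obtain ⟨n, hnS, -, hn⟩ := hS _ (hexp x y hne)
  exact (hxy n hnS).not_gt hn

theorem IsExpansivityConstant.subsingleton_iInter_preimage_closure
    (hexp : IsExpansivityConstant f F δ) (hδ : 0 ≤ δ) {S : Set ℕ} (hS : S ∈ dualFamily F)
    {A : ℕ → Set X} (hA : ∀ n ∈ S, Metric.ediam (A n) ≤ ENNReal.ofReal δ) :
    (⋂ n ∈ S, f^[n] ⁻¹' closure (A n)).Subsingleton := by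
  intro x hx y hy
  refine hexp.eq_of_forall_dist_iterate_le hS fun n hn ↦ (edist_le_ofReal hδ).mp ?_
  have hxn : f^[n] x ∈ closure (A n) := Set.mem_iInter₂.mp hx n hn
  have hyn : f^[n] y ∈ closure (A n) := Set.mem_iInter₂.mp hy n hn
  calc edist (f^[n] x) (f^[n] y) ≤ Metric.ediam (closure (A n)) :=
        Metric.edist_le_ediam_of_mem hxn hyn
    _ = Metric.ediam (A n) := Metric.ediam_closure (A n)
    _ ≤ ENNReal.ofReal δ := hA n hn

theorem stmt_11_general (hX : TotallyBounded (Set.univ : Set X)) (hδ : 0 < δ)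
    (hexp : IsExpansivityConstant f F δ) : ∃ U : Set (Set X), IsGenerator f (dualFamily F) U := by
  obtain ⟨U, hfinite, hopen, hcover, hdiam⟩ :=
    exists_finite_isOpen_cover_ediam_le hX (ENNReal.ofReal_pos.mpr hδ).ne'
  refine ⟨U, hfinite, hopen, Set.univ_subset_iff.mp hcover, fun A hA S hS ↦ ?_⟩
  exact hexp.subsingleton_iInter_preimage_closure hδ.le hS fun n _ ↦ hdiam (A n) (hA n)

end

theorem stmt_11 {X : Type*} [MetricSpace X] [CompactSpace X] (f : X → X)
    (hf : Continuous f)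
    (F : Set (Set ℕ)) (hF : ∀ B ∈ F, ∀ C : Set ℕ, B ⊆ C → C ∈ F)
    (hexp : ∃ δ > (0 : ℝ), ∀ x y : X, x ≠ y → posNset f x y δ ∈ F) :
    ∃ U : Set (Set X), IsGenerator f (dualFamily F) U := by
  obtain ⟨δ, hδ, hexp⟩ := hexp
  exact stmt_11_general isCompact_univ.totallyBounded hδ hexp
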